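/- Let d_in be a positive integer and let u, v be fixed nonzero vectors in R^{d_in} with ||u|| = r·||v|| for some r > 0, and suppose cosSim(u,v) < ( (1/2)(r + 1/r) )^{-1}. For each positive integer m, let W be an m × d_in random matrix whose entries are independent N(0, 1/m) Gaussian random variables, and let b ∈ R^m be a random vector with independent N(0, 1/m) Gaussian coordinates, independent of W. Let ReLU act componentwise, ReLU(x)_k = max(x_k, 0). Then there exists a constant C > 0 (depending only on u and v) such that for every m ≥ 1, the probability that cosSim(ReLU(Wu + b), ReLU(Wv + b)) > cosSim(u, v) is at least 1 − C/m. -/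

import Mathlib

/-!
Cosine similarity and ReLU are compatible with positive scaling, so the factor `1/√m` is harmless
and the pre-activations of the `m` neurons may be taken to be independent copies of one pair
`(X, Y)`. For weights of variance `p` and biases of variance `t`, `E X² = p‖u‖² + t`,
`E Y² = p‖v‖² + t` and `E XY = p⟨u, v⟩ + t`. Since `(X, Y)` and `(-X, -Y)` have the same law and
`xy ≤ x⁺y⁺ + x⁻y⁻`, with equality for `x = y`, ReLU halves the second moments and leaves at least
half of `E XY`. The population cosine similarity after the layer is therefore at least
`E XY / √(E X² E Y²)`: the bias has pulled the two inputs together, and the hypothesis on `u` and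
`v` is what makes this exceed `cosSim u v`.

The cosine similarity of the activation vectors is a continuous function of three sample means of
square-integrable variables, so Chebyshev's inequality gives failure probability `O(1/m)`.
-/

open MeasureTheory ProbabilityTheory

/-- Euclidean dot product on `Fin n → ℝ`. -/
noncomputable def dotp {n : ℕ} (x y : Fin n → ℝ) : ℝ := ∑ i, x i * y i

/-- Euclidean norm on `Fin n → ℝ`. -/
noncomputable def enorm' {n : ℕ} (x : Fin n → ℝ) : ℝ := Real.sqrt (dotp x x)

/-- Cosine similarity: `⟨x,y⟩ / (‖x‖‖y‖)` for nonzero vectors, `0` otherwise. -/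
noncomputable def cosSim {n : ℕ} (x y : Fin n → ℝ) : ℝ :=
  if x ≠ 0 ∧ y ≠ 0 then dotp x y / (enorm' x * enorm' y) else 0

/-- Componentwise ReLU. -/
noncomputable def relu {m : ℕ} (x : Fin m → ℝ) : Fin m → ℝ := fun k => max (x k) 0

open Topology

section SampleMean

variable {E : Type*} [MeasurableSpace E] {P : Measure E} [IsProbabilityMeasure P]

lemma memLp_sum_comp_eval {ι : Type*} [Fintype ι] {f : E → ℝ} {p : ENNReal} (hf : MemLp f p P) :
    MemLp (fun ω : ι → E => ∑ k, f (ω k)) p (Measure.pi fun _ : ι => P) :=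
  memLp_finsetSum _ fun k _ =>
    hf.comp_measurePreserving (measurePreserving_eval (fun _ : ι => P) k)

lemma integral_mean_pi {ι : Type*} [Fintype ι] [Nonempty ι] {f : E → ℝ} (hf : Integrable f P) :
    ∫ ω, (∑ k, f (ω k)) / Fintype.card ι ∂(Measure.pi fun _ : ι => P) = ∫ x, f x ∂P := by
  rw [integral_div, integral_finsetSum _ fun k _ => integrable_comp_eval (i := k) hf]
  simp_rw [integral_comp_eval (μ := fun _ : ι => P) hf.aestronglyMeasurable]
  simp

lemma variance_mean_pi {ι : Type*} [Fintype ι] {f : E → ℝ} (hf : MemLp f 2 P) :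
    Var[fun ω => (∑ k, f (ω k)) / Fintype.card ι; Measure.pi fun _ : ι => P] =
      Var[f; P] / Fintype.card ι := by
  have hsum : Var[fun ω => ∑ k, f (ω k); Measure.pi fun _ : ι => P] =
      Fintype.card ι * Var[f; P] := by
    simpa [Finset.sum_fn] using variance_sum_pi (μ := fun _ : ι => P) (X := fun _ => f) fun _ => hf
  simp_rw [div_eq_mul_inv]
  rw [variance_mul_const, hsum]
  field_simp

lemma measureReal_le_abs_mean_sub_integral_le {ι : Type*} [Fintype ι] [Nonempty ι] {f : E → ℝ}
    (hf : MemLp f 2 P) {ε : ℝ} (hε : 0 < ε) :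
    (Measure.pi fun _ : ι => P).real
        {ω | ε ≤ |(∑ k, f (ω k)) / Fintype.card ι - ∫ x, f x ∂P|} ≤
      Var[f; P] / ε ^ 2 / Fintype.card ι := by
  have hmean : MemLp (fun ω : ι → E => (∑ k, f (ω k)) / Fintype.card ι) 2
      (Measure.pi fun _ : ι => P) := by
    simpa only [div_eq_mul_inv] using (memLp_sum_comp_eval hf).mul_const _
  have h := meas_ge_le_variance_div_sq hmean hε
  rw [integral_mean_pi (hf.integrable one_le_two), variance_mean_pi hf, div_right_comm] at h
  exact ENNReal.toReal_le_of_le_ofReal (by have := variance_nonneg f P; positivity) h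

lemma exists_one_sub_div_le_measureReal_mean_mem {κ : Type*} [Finite κ] {f : κ → E → ℝ}
    (hf : ∀ i, MemLp (f i) 2 P) {U : Set (κ → ℝ)} (hU : U ∈ 𝓝 fun i => ∫ x, f i x ∂P) :
    ∃ C > (0 : ℝ), ∀ m : ℕ, 1 ≤ m → 1 - C / m ≤
      (Measure.pi fun _ : Fin m => P).real {ω | (fun i => (∑ k, f i (ω k)) / m) ∈ U} := by
  cases nonempty_fintype κ
  obtain ⟨ε, hε, hball⟩ := Metric.mem_nhds_iff.mp hU
  have hC : 0 ≤ ∑ i, Var[f i; P] / ε ^ 2 :=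
    Finset.sum_nonneg fun i _ => div_nonneg (variance_nonneg _ _) (sq_nonneg ε)
  refine ⟨∑ i, Var[f i; P] / ε ^ 2 + 1, by positivity, fun m hm => ?_⟩
  have : Nonempty (Fin m) := ⟨⟨0, hm⟩⟩
  set Q := Measure.pi fun _ : Fin m => P
  set good := {ω : Fin m → E | (fun i => (∑ k, f i (ω k)) / m) ∈ U}
  let bad i := {ω : Fin m → E | ε ≤ |(∑ k, f i (ω k)) / m - ∫ x, f i x ∂P|}
  have hcompl : goodᶜ ⊆ ⋃ i, bad i := by
    intro ω hω
    by_contra hbad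
    simp only [bad, Set.mem_iUnion, Set.mem_ofPred_eq, not_exists, not_le] at hbad
    exact hω (hball ((dist_pi_lt_iff hε).mpr hbad))
  have hbad : Q.real goodᶜ ≤ (∑ i, Var[f i; P] / ε ^ 2) / m := calc
    Q.real goodᶜ ≤ ∑ i, Q.real (bad i) :=
      (measureReal_mono hcompl).trans (measureReal_iUnion_fintype_le _)
    _ ≤ ∑ i, Var[f i; P] / ε ^ 2 / m := Finset.sum_le_sum fun i _ => by
      simpa only [Fintype.card_fin] using
        measureReal_le_abs_mean_sub_integral_le (ι := Fin m) (hf i) hε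
    _ = (∑ i, Var[f i; P] / ε ^ 2) / m := (Finset.sum_div _ _ _).symm
  have htotal : 1 ≤ Q.real good + Q.real goodᶜ := by
    simpa using measureReal_union_le (μ := Q) good goodᶜ
  have hm' : (0 : ℝ) ≤ 1 / m := by positivity
  rw [add_div]
  linarith

end SampleMean

section CosSim

lemma dotp_self_nonneg {n : ℕ} (x : Fin n → ℝ) : 0 ≤ dotp x x :=
  Finset.sum_nonneg fun i _ => mul_self_nonneg (x i)

lemma enorm'_sq {n : ℕ} (x : Fin n → ℝ) : enorm' x ^ 2 = dotp x x :=
  Real.sq_sqrt (dotp_self_nonneg x)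

lemma enorm'_pos {n : ℕ} {x : Fin n → ℝ} (hx : x ≠ 0) : 0 < enorm' x :=
  Real.sqrt_pos.mpr <| (dotp_self_nonneg x).lt_of_ne' (mt dotProduct_self_eq_zero.mp hx)

lemma dotp_smul_smul {n : ℕ} (s t : ℝ) (x y : Fin n → ℝ) :
    dotp (s • x) (t • y) = s * t * dotp x y := by
  simp only [dotp, Pi.smul_apply, smul_eq_mul, Finset.mul_sum]
  exact Finset.sum_congr rfl fun i _ => by ring

-- The degenerate case agrees because `0 / 0 = 0`.
lemma cosSim_eq_div {n : ℕ} (x y : Fin n → ℝ) :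
    cosSim x y = dotp x y / (enorm' x * enorm' y) := by
  unfold cosSim
  split_ifs with h
  · rfl
  · obtain rfl | rfl : x = 0 ∨ y = 0 := by tauto
    all_goals simp [dotp]

lemma cosSim_mul_enorm' {n : ℕ} (x y : Fin n → ℝ) :
    cosSim x y * (enorm' x * enorm' y) = dotp x y := by
  by_cases h : x = 0 ∨ y = 0
  · obtain rfl | rfl := h <;> simp [dotp, enorm']
  · obtain ⟨hx, hy⟩ := not_or.mp h
    rw [cosSim_eq_div, div_mul_cancel₀ _ (mul_pos (enorm'_pos hx) (enorm'_pos hy)).ne']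

lemma enorm'_smul {n : ℕ} {s : ℝ} (hs : 0 ≤ s) (x : Fin n → ℝ) :
    enorm' (s • x) = s * enorm' x := by
  rw [enorm', dotp_smul_smul, Real.sqrt_mul (mul_self_nonneg s), Real.sqrt_mul_self hs, enorm']

lemma cosSim_smul_smul {n : ℕ} {s : ℝ} (hs : 0 < s) (x y : Fin n → ℝ) :
    cosSim (s • x) (s • y) = cosSim x y := by
  rw [cosSim_eq_div, cosSim_eq_div, dotp_smul_smul, enorm'_smul hs.le, enorm'_smul hs.le]
  field_simp

lemma cosSim_eq_div_div {n : ℕ} {t : ℝ} (ht : 0 < t) (x y : Fin n → ℝ) :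
    cosSim x y = dotp x y / t / (√(dotp x x / t) * √(dotp y y / t)) := by
  rw [cosSim_eq_div, enorm', enorm', Real.sqrt_div (dotp_self_nonneg x),
    Real.sqrt_div (dotp_self_nonneg y), div_mul_div_comm, Real.mul_self_sqrt ht.le,
    div_div_div_cancel_right₀ ht.ne']

lemma relu_smul {n : ℕ} {s : ℝ} (hs : 0 ≤ s) (x : Fin n → ℝ) : relu (s • x) = s • relu x := by
  ext k
  simp only [relu, Pi.smul_apply, smul_eq_mul, mul_max_of_nonneg _ _ hs, mul_zero]

end CosSim

section Concentration

variable {E : Type*} [MeasurableSpace E] {P : Measure E}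

lemma memLp_two_mul {F G : E → ℝ} (hF : MemLp F 4 P) (hG : MemLp G 4 P) :
    MemLp (fun z => F z * G z) 2 P := by
  have : ENNReal.HolderTriple 4 4 2 := ⟨by
    rw [show (4 : ENNReal) = 2 * 2 by norm_num, ENNReal.mul_inv (by simp) (by simp), ← mul_add,
      ENNReal.inv_two_add_inv_two, mul_one]⟩
  exact hG.mul' hF

lemma exists_one_sub_div_le_measureReal_lt_cosSim [IsProbabilityMeasure P] {F G : E → ℝ}
    (hF : MemLp F 4 P) (hG : MemLp G 4 P)
    (hFF : 0 < ∫ z, F z * F z ∂P) (hGG : 0 < ∫ z, G z * G z ∂P) {c : ℝ}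
    (hc : c < (∫ z, F z * G z ∂P) / (√(∫ z, F z * F z ∂P) * √(∫ z, G z * G z ∂P))) :
    ∃ C > (0 : ℝ), ∀ m : ℕ, 1 ≤ m → 1 - C / m ≤
      (Measure.pi fun _ : Fin m => P).real
        {ω | c < cosSim (fun k => F (ω k)) (fun k => G (ω k))} := by
  let moments : Fin 3 → E → ℝ :=
    ![fun z => F z * G z, fun z => F z * F z, fun z => G z * G z]
  have hmoments : ∀ i, MemLp (moments i) 2 P := by
    intro i
    fin_cases i
    exacts [memLp_two_mul hF hG, memLp_two_mul hF hF, memLp_two_mul hG hG]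
  have hcont : ContinuousAt (fun q : Fin 3 → ℝ => q 0 / (√(q 1) * √(q 2)))
      fun i => ∫ z, moments i z ∂P := by
    refine ContinuousAt.div (Continuous.continuousAt (by fun_prop))
      (Continuous.continuousAt (by fun_prop)) ?_
    exact (mul_pos (Real.sqrt_pos.mpr hFF) (Real.sqrt_pos.mpr hGG)).ne'
  obtain ⟨C, hC, hgood⟩ :=
    exists_one_sub_div_le_measureReal_mean_mem hmoments (hcont.eventually (lt_mem_nhds hc))
  refine ⟨C, hC, fun m hm => (hgood m hm).trans_eq ?_⟩
  simp_rw [cosSim_eq_div_div (Nat.cast_pos.mpr hm : (0 : ℝ) < m)]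
  rfl

end Concentration

section Symmetry

lemma mul_eq_max_mul_max (x y : ℝ) :
    x * y = max x 0 * max y 0 + max (-x) 0 * max (-y) 0 -
      (max x 0 * max (-y) 0 + max (-x) 0 * max y 0) := by
  conv_lhs => rw [← max_zero_sub_max_neg_zero_eq_self x, ← max_zero_sub_max_neg_zero_eq_self y]
  ring

lemma mul_le_max_mul_max_add (x y : ℝ) :
    x * y ≤ max x 0 * max y 0 + max (-x) 0 * max (-y) 0 := by
  rw [mul_eq_max_mul_max x y]
  exact sub_le_self _ (by positivity)

lemma mul_self_eq_max_mul_max_add (x : ℝ) :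
    x * x = max x 0 * max x 0 + max (-x) 0 * max (-x) 0 := by
  rcases le_total x 0 with hx | hx <;> simp [hx]

lemma integrable_max_mul_max {E : Type*} [MeasurableSpace E] {P : Measure E} {X Y : E → ℝ}
    (hX : MemLp X 2 P) (hY : MemLp Y 2 P) :
    Integrable (fun z => max (X z) 0 * max (Y z) 0) P :=
  hX.pos_part.integrable_mul hY.pos_part

variable {E : Type*} [AddGroup E] [MeasurableSpace E] [MeasurableNeg E] {P : Measure E}
  [P.IsNegInvariant]

lemma integral_add_comp_neg {φ : E → ℝ} (hφ : Integrable φ P) :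
    ∫ z, (φ z + φ (-z)) ∂P = 2 * ∫ z, φ z ∂P := by
  rw [integral_add hφ hφ.comp_neg, integral_neg_eq_self, two_mul]

lemma integral_eq_zero_of_odd {X : E → ℝ} (hX : X.Odd) : ∫ z, X z ∂P = 0 := by
  have h := integral_neg_eq_self X P
  simp_rw [hX _, integral_neg] at h
  linarith

variable {X Y : E → ℝ}

lemma integral_mul_le_two_mul_integral_max_mul_max (hX : MemLp X 2 P) (hY : MemLp Y 2 P)
    (hXodd : X.Odd) (hYodd : Y.Odd) :
    ∫ z, X z * Y z ∂P ≤ 2 * ∫ z, max (X z) 0 * max (Y z) 0 ∂P := by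
  have hint := integrable_max_mul_max hX hY
  rw [← integral_add_comp_neg hint]
  refine integral_mono (hX.integrable_mul hY) (hint.add hint.comp_neg) fun z => ?_
  simpa only [hXodd z, hYodd z] using mul_le_max_mul_max_add (X z) (Y z)

lemma integral_mul_self_eq_two_mul_integral_max_mul_max (hX : MemLp X 2 P) (hXodd : X.Odd) :
    ∫ z, X z * X z ∂P = 2 * ∫ z, max (X z) 0 * max (X z) 0 ∂P := by
  rw [← integral_add_comp_neg (integrable_max_mul_max hX hX)]
  congr 1 with z
  rw [hXodd z, mul_self_eq_max_mul_max_add]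

theorem exists_one_sub_div_le_measureReal_lt_cosSim_relu [IsProbabilityMeasure P]
    (hX : MemLp X 4 P) (hY : MemLp Y 4 P) (hXodd : X.Odd) (hYodd : Y.Odd)
    (hXX : 0 < ∫ z, X z * X z ∂P) (hYY : 0 < ∫ z, Y z * Y z ∂P) {c : ℝ}
    (hc : c < (∫ z, X z * Y z ∂P) / (√(∫ z, X z * X z ∂P) * √(∫ z, Y z * Y z ∂P))) :
    ∃ C > (0 : ℝ), ∀ m : ℕ, 1 ≤ m → 1 - C / m ≤
      (Measure.pi fun _ : Fin m => P).real
        {ω | c < cosSim (relu fun k => X (ω k)) (relu fun k => Y (ω k))} := by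
  have hX2 : MemLp X 2 P := hX.mono_exponent (by norm_num)
  have hY2 : MemLp Y 2 P := hY.mono_exponent (by norm_num)
  have hXY := integral_mul_le_two_mul_integral_max_mul_max hX2 hY2 hXodd hYodd
  rw [integral_mul_self_eq_two_mul_integral_max_mul_max hX2 hXodd] at hXX hc
  rw [integral_mul_self_eq_two_mul_integral_max_mul_max hY2 hYodd] at hYY hc
  refine exists_one_sub_div_le_measureReal_lt_cosSim hX.pos_part hY.pos_part
    (pos_of_mul_pos_right hXX zero_le_two) (pos_of_mul_pos_right hYY zero_le_two) (hc.trans_le ?_)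
  rw [Real.sqrt_mul zero_le_two, Real.sqrt_mul zero_le_two, mul_mul_mul_comm,
    Real.mul_self_sqrt zero_le_two]
  refine (div_le_div_of_nonneg_right hXY (by positivity)).trans_eq ?_
  rw [mul_div_mul_left _ _ two_ne_zero]

end Symmetry

section Covariance

lemma covariance_fun_comp_of_measurePreserving {E F : Type*} [MeasurableSpace E]
    [MeasurableSpace F] {μ : Measure E} {ν : Measure F} {T : E → F} (hT : MeasurePreserving T μ ν)
    {f g : F → ℝ} (hf : AEStronglyMeasurable f ν) (hg : AEStronglyMeasurable g ν) :
    cov[fun z => f (T z), fun z => g (T z); μ] = cov[f, g; ν] := by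
  obtain ⟨hTmeas, rfl⟩ := hT
  exact (covariance_map_fun hf hg hTmeas.aemeasurable).symm

lemma covariance_fun_add_prod {E F : Type*} [MeasurableSpace E] [MeasurableSpace F]
    {μ : Measure E} {ν : Measure F} [IsProbabilityMeasure μ] [IsProbabilityMeasure ν]
    {f f' : E → ℝ} {g g' : F → ℝ} (hf : MemLp f 2 μ) (hf' : MemLp f' 2 μ)
    (hg : MemLp g 2 ν) (hg' : MemLp g' 2 ν) :
    cov[fun z => f z.1 + g z.2, fun z => f' z.1 + g' z.2; μ.prod ν] =
      cov[f, f'; μ] + cov[g, g'; ν] := by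
  have hff' : cov[fun z => f z.1, fun z => f' z.1; μ.prod ν] = cov[f, f'; μ] :=
    covariance_fun_comp_of_measurePreserving measurePreserving_fst hf.aestronglyMeasurable
      hf'.aestronglyMeasurable
  have hgg' : cov[fun z => g z.2, fun z => g' z.2; μ.prod ν] = cov[g, g'; ν] :=
    covariance_fun_comp_of_measurePreserving measurePreserving_snd hg.aestronglyMeasurable
      hg'.aestronglyMeasurable
  have hfg' : cov[fun z => f z.1, fun z => g' z.2; μ.prod ν] = 0 :=
    covariance_fst_snd_prod hf hg'
  have hgf' : cov[fun z => g z.2, fun z => f' z.1; μ.prod ν] = 0 := by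
    rw [covariance_comm, covariance_fst_snd_prod hf' hg]
  change cov[(fun z : E × F => f z.1) + (fun z : E × F => g z.2),
    (fun z : E × F => f' z.1) + (fun z : E × F => g' z.2); μ.prod ν] = _
  rw [covariance_add_left (hf.comp_fst ν) (hg.comp_snd μ)
      ((hf'.comp_fst ν).add (hg'.comp_snd μ)),
    covariance_add_right (hf.comp_fst ν) (hf'.comp_fst ν) (hg'.comp_snd μ),
    covariance_add_right (hg.comp_snd μ) (hf'.comp_fst ν) (hg'.comp_snd μ),
    hff', hgg', hfg', hgf', add_zero, zero_add]

variable {ι : Type*} [Fintype ι] {μ : Measure ℝ} [IsProbabilityMeasure μ]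

lemma memLp_eval_pi {p : ENNReal} (hμ : MemLp id p μ) (i : ι) :
    MemLp (fun w => w i) p (Measure.pi fun _ : ι => μ) :=
  hμ.comp_measurePreserving (measurePreserving_eval (fun _ : ι => μ) i)

lemma memLp_sum_mul_pi {p : ENNReal} (hμ : MemLp id p μ) (a : ι → ℝ) :
    MemLp (fun w => ∑ i, w i * a i) p (Measure.pi fun _ : ι => μ) :=
  memLp_finsetSum _ fun i _ => (memLp_eval_pi hμ i).mul_const (a i)

lemma covariance_eval_pi [DecidableEq ι] (hμ : MemLp id 2 μ) (i j : ι) :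
    cov[fun w => w i, fun w => w j; Measure.pi fun _ : ι => μ] =
      if i = j then Var[id; μ] else 0 := by
  split_ifs with hij
  · subst hij
    rw [covariance_self (measurable_pi_apply i).aemeasurable]
    exact (measurePreserving_eval (fun _ : ι => μ) i).variance_fun_comp aemeasurable_id
  · have hindep := (iIndepFun_pi (μ := fun _ : ι => μ) (X := fun _ => id)
      fun _ => aemeasurable_id).indepFun hij
    exact hindep.covariance_eq_zero (memLp_eval_pi hμ i) (memLp_eval_pi hμ j)

lemma covariance_sum_mul_pi (hμ : MemLp id 2 μ) (a b : ι → ℝ) :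
    cov[fun w => ∑ i, w i * a i, fun w => ∑ i, w i * b i; Measure.pi fun _ : ι => μ] =
      Var[id; μ] * ∑ i, a i * b i := by
  classical
  rw [covariance_fun_sum_fun_sum (fun i => (memLp_eval_pi hμ i).mul_const (a i))
    fun i => (memLp_eval_pi hμ i).mul_const (b i)]
  simp only [covariance_mul_const_left, covariance_mul_const_right, covariance_eval_pi hμ,
    ite_mul, zero_mul, Finset.sum_ite_eq, Finset.mem_univ, if_true, Finset.mul_sum]
  exact Finset.sum_congr rfl fun i _ => by ring

end Covariance

section Preactivation

/-- The pre-activation `⟨w, a⟩ + b` on input `a`, as a function of the parameters `(w, b)` of a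
single neuron. -/
def preactivation {d : ℕ} (a : Fin d → ℝ) (z : (Fin d → ℝ) × ℝ) : ℝ :=
  (∑ l, z.1 l * a l) + z.2

lemma odd_preactivation {d : ℕ} (a : Fin d → ℝ) : (preactivation a).Odd := fun z => by
  simp only [preactivation, Prod.fst_neg, Prod.snd_neg, Pi.neg_apply, neg_mul,
    Finset.sum_neg_distrib, neg_add]

lemma preactivation_smul {d : ℕ} (a : Fin d → ℝ) (s : ℝ) (z : (Fin d → ℝ) × ℝ) :
    preactivation a (s • z) = s * preactivation a z := by
  simp only [preactivation, Prod.smul_fst, Prod.smul_snd, Pi.smul_apply, smul_eq_mul, mul_add,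
    Finset.mul_sum, mul_assoc]

/-- The law of the parameters of a single neuron: `d` independent weights of law `μ` and an
independent bias of law `ν`. -/
noncomputable def neuronLaw (d : ℕ) (μ ν : Measure ℝ) : Measure ((Fin d → ℝ) × ℝ) :=
  (Measure.pi fun _ => μ).prod ν

variable {d : ℕ} {μ ν : Measure ℝ} [IsProbabilityMeasure μ] [IsProbabilityMeasure ν]

instance isProbabilityMeasure_neuronLaw : IsProbabilityMeasure (neuronLaw d μ ν) := by
  unfold neuronLaw
  infer_instance

instance isNegInvariant_neuronLaw [μ.IsNegInvariant] [ν.IsNegInvariant] :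
    (neuronLaw d μ ν).IsNegInvariant :=
  ⟨((Measure.measurePreserving_neg (Measure.pi fun _ : Fin d => μ)).prod
    (Measure.measurePreserving_neg ν)).map_eq⟩

lemma memLp_preactivation {p : ENNReal} (hμ : MemLp id p μ) (hν : MemLp id p ν)
    (a : Fin d → ℝ) : MemLp (preactivation a) p (neuronLaw d μ ν) :=
  ((memLp_sum_mul_pi hμ a).comp_measurePreserving measurePreserving_fst).add
    (hν.comp_measurePreserving measurePreserving_snd)

lemma covariance_preactivation (hμ : MemLp id 2 μ) (hν : MemLp id 2 ν) (a b : Fin d → ℝ) :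
    cov[preactivation a, preactivation b; neuronLaw d μ ν] =
      Var[id; μ] * dotp a b + Var[id; ν] := by
  rw [dotp, ← covariance_sum_mul_pi hμ, ← covariance_self aemeasurable_id]
  exact covariance_fun_add_prod (memLp_sum_mul_pi hμ a) (memLp_sum_mul_pi hμ b) hν hν

lemma integral_preactivation_mul [μ.IsNegInvariant] [ν.IsNegInvariant]
    (hμ : MemLp id 2 μ) (hν : MemLp id 2 ν) (a b : Fin d → ℝ) :
    ∫ z, preactivation a z * preactivation b z ∂(neuronLaw d μ ν) =
      Var[id; μ] * dotp a b + Var[id; ν] := by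
  rw [← covariance_preactivation hμ hν, covariance_eq_sub (memLp_preactivation hμ hν a)
    (memLp_preactivation hμ hν b), integral_eq_zero_of_odd (odd_preactivation a), zero_mul,
    sub_zero]
  rfl

end Preactivation

section Correlation

lemma mul_add_le_sqrt_mul_sqrt (a b : ℝ) {p t : ℝ} (hp : 0 ≤ p) (ht : 0 ≤ t) :
    p * (a * b) + t ≤ √(p * a ^ 2 + t) * √(p * b ^ 2 + t) := by
  rw [← Real.sqrt_mul (by positivity)]
  apply Real.le_sqrt_of_sq_le
  nlinarith [mul_nonneg (mul_nonneg hp ht) (sq_nonneg (a - b))]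

-- For `c ≤ 0`, Cauchy–Schwarz and `c < 1` suffice; for `c > 0`, compare squares: the hypothesis
-- controls the cross term `p * t`, and `c < 1` makes the `t ^ 2` term strict.
lemma lt_div_sqrt_mul_sqrt {a b c p t : ℝ} (hp : 0 ≤ p) (ht : 0 < t)
    (hc : c * (a ^ 2 + b ^ 2) < 2 * (a * b)) :
    c < (p * (c * (a * b)) + t) / (√(p * a ^ 2 + t) * √(p * b ^ 2 + t)) := by
  have hc1 : c < 1 := by nlinarith [sq_nonneg (a - b), sq_nonneg a, sq_nonneg b]
  rw [lt_div_iff₀ (by positivity)]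
  rcases le_or_gt c 0 with h0 | h0
  · calc c * (√(p * a ^ 2 + t) * √(p * b ^ 2 + t))
      _ ≤ c * (p * (a * b) + t) :=
        mul_le_mul_of_nonpos_left (mul_add_le_sqrt_mul_sqrt a b hp ht.le) h0
      _ < p * (c * (a * b)) + t := by nlinarith
  · have hab : 0 < a * b := by nlinarith [sq_nonneg a, sq_nonneg b]
    refine lt_of_pow_lt_pow_left₀ 2 (by positivity) ?_
    rw [mul_pow, mul_pow, Real.sq_sqrt (by positivity), Real.sq_sqrt (by positivity)]
    have hcross : p * t * c * (c * (a ^ 2 + b ^ 2)) ≤ p * t * c * (2 * (a * b)) := by gcongr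
    have hsq : c ^ 2 * t ^ 2 < t ^ 2 :=
      mul_lt_of_lt_one_left (by positivity) (pow_lt_one₀ h0.le hc1 two_ne_zero)
    linarith

lemma mul_sq_add_sq_lt_of_lt_inv {a b c r : ℝ} (hr : 0 < r) (hb : 0 < b) (hab : a = r * b)
    (hc : c < ((1 / 2) * (r + 1 / r))⁻¹) : c * (a ^ 2 + b ^ 2) < 2 * (a * b) := by
  subst hab
  have hinv : ((1 / 2) * (r + 1 / r))⁻¹ = 2 * (r * b * b) / ((r * b) ^ 2 + b ^ 2) := by field_simp
  rwa [hinv, lt_div_iff₀ (by positivity)] at hc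

end Correlation

section Layer

/-- The law of the weight matrix and the bias vector of a layer of `m` neurons whose weights and
biases are independent, distributed as `s * w` for `w ∼ μ` and as `s * b` for `b ∼ ν`. -/
noncomputable def scaledLayerLaw (d m : ℕ) (s : ℝ) (μ ν : Measure ℝ) :
    Measure ((Fin m → Fin d → ℝ) × (Fin m → ℝ)) :=
  (Measure.pi fun _ => Measure.pi fun _ => μ.map (s * ·)).prod (Measure.pi fun _ => ν.map (s * ·))

lemma measurePreserving_scaledLayerLaw (d m : ℕ) (s : ℝ) (μ ν : Measure ℝ)
    [IsProbabilityMeasure μ] [IsProbabilityMeasure ν] :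
    MeasurePreserving (fun ω : Fin m → (Fin d → ℝ) × ℝ =>
        ((fun k => s • (ω k).1, fun k => s • (ω k).2) : (Fin m → Fin d → ℝ) × (Fin m → ℝ)))
      (Measure.pi fun _ => neuronLaw d μ ν) (scaledLayerLaw d m s μ ν) := by
  have hscale (ρ : Measure ℝ) : MeasurePreserving (s * ·) ρ (ρ.map (s * ·)) :=
    (measurable_const_mul s).measurePreserving ρ
  have : IsProbabilityMeasure (μ.map (s * ·)) :=
    Measure.isProbabilityMeasure_map (by fun_prop)
  have : IsProbabilityMeasure (ν.map (s * ·)) :=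
    Measure.isProbabilityMeasure_map (by fun_prop)
  have hneuron := (measurePreserving_pi (fun _ : Fin d => μ) _ fun _ => hscale μ).prod (hscale ν)
  exact (measurePreserving_arrowProdEquivProdArrow _ _ (Fin m) _ _).comp
    (measurePreserving_pi (fun _ : Fin m => neuronLaw d μ ν) _ fun _ => hneuron)

lemma measureReal_preimage_le_of_measurePreserving {E F : Type*} [MeasurableSpace E]
    [MeasurableSpace F] {μ : Measure E} {ν : Measure F} [IsFiniteMeasure μ] {T : E → F}
    (hT : MeasurePreserving T μ ν) (s : Set F) : μ.real (T ⁻¹' s) ≤ ν.real s := by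
  obtain ⟨hTmeas, rfl⟩ := hT
  exact ENNReal.toReal_mono (measure_ne_top _ s) (Measure.le_map_apply hTmeas.aemeasurable s)

lemma cosSim_relu_scaled_layer {d m : ℕ} {s : ℝ} (hs : 0 < s) (u v : Fin d → ℝ)
    (ω : Fin m → (Fin d → ℝ) × ℝ) :
    cosSim (relu fun k => preactivation u (s • ω k)) (relu fun k => preactivation v (s • ω k)) =
      cosSim (relu fun k => preactivation u (ω k)) (relu fun k => preactivation v (ω k)) := by
  have hrelu (a : Fin d → ℝ) : (relu fun k => preactivation a (s • ω k)) =
      s • relu fun k => preactivation a (ω k) := by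
    rw [← relu_smul hs.le]
    simp only [preactivation_smul]
    rfl
  rw [hrelu, hrelu, cosSim_smul_smul hs]

end Layer

theorem relu_layer_increases_cosSim_whp_general {d : ℕ} {μ ν : Measure ℝ}
    [IsProbabilityMeasure μ] [IsProbabilityMeasure ν] [μ.IsNegInvariant] [ν.IsNegInvariant]
    (hμ : MemLp id 4 μ) (hν : MemLp id 4 ν) (hνvar : 0 < Var[id; ν]) {u v : Fin d → ℝ}
    (hcos : cosSim u v * (enorm' u ^ 2 + enorm' v ^ 2) < 2 * (enorm' u * enorm' v)) :
    ∃ C > (0 : ℝ), ∀ m : ℕ, 1 ≤ m → ∀ s > (0 : ℝ), 1 - C / m ≤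
      (scaledLayerLaw d m s μ ν).real
        {ω | cosSim u v <
          cosSim (relu fun k => (∑ l, ω.1 k l * u l) + ω.2 k)
            (relu fun k => (∑ l, ω.1 k l * v l) + ω.2 k)} := by
  have hmoment := integral_preactivation_mul (d := d)
    (hμ.mono_exponent (by norm_num)) (hν.mono_exponent (by norm_num) : MemLp id 2 ν)
  have hpos (a : Fin d → ℝ) :
      0 < ∫ z, preactivation a z * preactivation a z ∂(neuronLaw d μ ν) := by
    rw [hmoment]
    exact add_pos_of_nonneg_of_pos (mul_nonneg (variance_nonneg _ _) (dotp_self_nonneg a)) hνvar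
  have hlimit := lt_div_sqrt_mul_sqrt (variance_nonneg id μ) hνvar hcos
  rw [cosSim_mul_enorm', enorm'_sq, enorm'_sq, ← hmoment, ← hmoment, ← hmoment] at hlimit
  obtain ⟨C, hC, hbound⟩ := exists_one_sub_div_le_measureReal_lt_cosSim_relu
    (memLp_preactivation hμ hν u) (memLp_preactivation hμ hν v)
    (odd_preactivation u) (odd_preactivation v) (hpos u) (hpos v) hlimit
  refine ⟨C, hC, fun m hm s hs => (hbound m hm).trans (le_of_eq_of_le ?_
    (measureReal_preimage_le_of_measurePreserving (measurePreserving_scaledLayerLaw d m s μ ν) _))⟩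
  congr 1 with ω
  exact iff_of_eq (congrArg (cosSim u v < ·) (cosSim_relu_scaled_layer hs u v ω).symm)

section Gaussian

lemma gaussianReal_map_inv_sqrt_mul (m : ℕ) :
    (gaussianReal 0 1).map ((√m)⁻¹ * ·) = gaussianReal 0 (1 / m) := by
  rw [gaussianReal_map_const_mul, mul_zero, mul_one]
  congr 1
  ext
  simp [inv_pow]

instance isNegInvariant_gaussianReal (v : NNReal) : (gaussianReal 0 v).IsNegInvariant :=
  ⟨gaussianReal_map_neg.trans (by rw [neg_zero])⟩

end Gaussian

theorem relu_layer_increases_cosSim_whp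
    (d : ℕ) (hd : 0 < d) (u v : Fin d → ℝ) (hu : u ≠ 0) (hv : v ≠ 0)
    (r : ℝ) (hr : 0 < r) (hnorm : enorm' u = r * enorm' v)
    (hcos : cosSim u v < ((1 / 2) * (r + 1 / r))⁻¹) :
    ∃ C > (0 : ℝ), ∀ m : ℕ, 1 ≤ m →
      (1 - C / m : ℝ) ≤
        (((Measure.pi fun _ : Fin m => Measure.pi fun _ : Fin d =>
              gaussianReal 0 (1 / m)).prod
            (Measure.pi fun _ : Fin m => gaussianReal 0 (1 / m)))
          {ω : (Fin m → Fin d → ℝ) × (Fin m → ℝ) |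
            cosSim u v <
              cosSim (relu fun k => (∑ l, ω.1 k l * u l) + ω.2 k)
                     (relu fun k => (∑ l, ω.1 k l * v l) + ω.2 k)}).toReal := by
  obtain ⟨C, hC, hbound⟩ := relu_layer_increases_cosSim_whp_general
    (μ := gaussianReal 0 1) (ν := gaussianReal 0 1)
    (memLp_id_gaussianReal' 4 (by simp)) (memLp_id_gaussianReal' 4 (by simp)) (by simp)
    (mul_sq_add_sq_lt_of_lt_inv hr (enorm'_pos hv) hnorm hcos)
  refine ⟨C, hC, fun m hm => ?_⟩
  have h := hbound m hm (√m)⁻¹ (by positivity)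
  rwa [scaledLayerLaw, gaussianReal_map_inv_sqrt_mul] at h
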